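/- Assume a₂(x₁,x₂) ≤ a₁(x₁,x₂) for a.e. (x₁,x₂) ∈ ℝ^d × ℝ^d. Then for every n ≥ 2, the operator L₀^(n) is dissipative on the symmetric functions: for every κ > 0 and every G ∈ X_n invariant (a.e.) under permutations of its n coordinates, ‖L₀^(n)G − κG‖_{X_n} ≥ κ‖G‖_{X_n}. -/

import Mathlib

open MeasureTheory

noncomputable section

/-- `ℝ^d` -/
abbrev Rd (d : ℕ) : Type := Fin d → ℝ

/-- The diagonal part `L₀⁽ⁿ⁾` of the binary-jump generator, acting on functions on `(ℝ^d)ⁿ`. -/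
def L0n (d n : ℕ) (c : Rd d → Rd d → Rd d → Rd d → ℝ)
    (G : (Fin n → Rd d) → ℝ) (x : Fin n → Rd d) : ℝ :=
  ∑ i : Fin n, ∑ j : Fin n, if i < j then
    ∫ y : Rd d × Rd d, c (x i) (x j) y.1 y.2 *
      (G (Function.update (Function.update x i y.1) j y.2) - G x)
  else 0

/-!
Since `‖H - κ G‖ ≥ ∫ sign G * (κ G - H) = κ ‖G‖ - ∫ sign G * H`, it suffices that
`∫ sign G * H ≤ 0` for `H = L₀⁽ⁿ⁾ G`. Unlike the norm estimate, this condition is preserved by sums,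
so it may be checked for each pair `i < j` of jumping coordinates. Exchanging `x_i, x_j` with the
target pair `(y₁, y₂)` preserves the product measure, whence
`∫ sign G * H ≤ ∫ (a₂(x_i, x_j) - a₁(x_i, x_j)) * |G x| dx ≤ 0`.
-/

section Sign

variable {R : Type*} [Ring R] [LinearOrder R] [IsStrictOrderedRing R]

theorem abs_signType_sign_le_one (t : R) : |(SignType.sign t : R)| ≤ 1 := by
  cases SignType.sign t <;> simp

theorem sign_mul_le_abs (t u : R) : SignType.sign t * u ≤ |u| :=
  calc SignType.sign t * u ≤ |(SignType.sign t : R)| * |u| := abs_mul _ u ▸ le_abs_self _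
    _ ≤ |u| := mul_le_of_le_one_left (abs_nonneg u) (abs_signType_sign_le_one t)

theorem measurable_signType_sign : Measurable fun t : ℝ => (SignType.sign t : ℝ) := by
  simp only [sign_apply, apply_ite (SignType.cast : SignType → ℝ)]
  exact measurable_const.ite measurableSet_Ioi
    (measurable_const.ite measurableSet_Iio measurable_const)

end Sign

section SignDissipative

variable {α : Type*} [MeasurableSpace α] {μ : Measure α} {G : α → ℝ}

/-- `H` is an integrable function on which the duality functional `sign G` of `G` in `L¹(μ)` is
nonpositive. For an operator `A`, this property of `H = A G` yields the dissipativity estimate for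
`A` at `G`. -/
structure IsSignDissipative (μ : Measure α) (G H : α → ℝ) : Prop where
  integrable : Integrable H μ
  integral_sign_mul_nonpos : ∫ x, (SignType.sign (G x) : ℝ) * H x ∂μ ≤ 0

theorem integrable_sign_mul (hG : AEStronglyMeasurable G μ) {H : α → ℝ} (hH : Integrable H μ) :
    Integrable (fun x => (SignType.sign (G x) : ℝ) * H x) μ :=
  hH.bdd_mul (measurable_signType_sign.comp_aemeasurable hG.aemeasurable).aestronglyMeasurable
    (ae_of_all _ fun x => abs_signType_sign_le_one (G x))

theorem integrable_mul_abs {r H : α → ℝ} (hr : ∀ x, 0 ≤ r x)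
    (h : Integrable (fun x => r x * H x) μ) : Integrable (fun x => r x * |H x|) μ := by
  simpa only [abs_mul, abs_of_nonneg (hr _)] using h.abs

namespace IsSignDissipative

theorem zero : IsSignDissipative μ G fun _ => 0 :=
  ⟨integrable_zero _ _ _, by simp⟩

theorem sum (hG : AEStronglyMeasurable G μ) {κ : Type*} {s : Finset κ} {H : κ → α → ℝ}
    (hH : ∀ k ∈ s, IsSignDissipative μ G (H k)) :
    IsSignDissipative μ G fun x => ∑ k ∈ s, H k x where
  integrable := integrable_finsetSum s fun k hk => (hH k hk).integrable
  integral_sign_mul_nonpos := by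
    simp only [Finset.mul_sum]
    rw [integral_finsetSum s fun k hk => integrable_sign_mul hG (hH k hk).integrable]
    exact Finset.sum_nonpos fun k hk => (hH k hk).integral_sign_mul_nonpos

theorem mul_integral_abs_le {H : α → ℝ} (hGH : IsSignDissipative μ G H) (hG : Integrable G μ)
    (κ : ℝ) : κ * ∫ x, |G x| ∂μ ≤ ∫ x, |H x - κ * G x| ∂μ := by
  have hsign := integrable_sign_mul hG.aestronglyMeasurable hGH.integrable
  have hpointwise (x : α) :
      κ * |G x| - SignType.sign (G x) * H x ≤ |H x - κ * G x| :=
    calc κ * |G x| - SignType.sign (G x) * H x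
        = SignType.sign (G x) * (κ * G x - H x) := by rw [← sign_mul_self]; ring
      _ ≤ |κ * G x - H x| := sign_mul_le_abs _ _
      _ = |H x - κ * G x| := abs_sub_comm _ _
  calc κ * ∫ x, |G x| ∂μ
      ≤ κ * ∫ x, |G x| ∂μ - ∫ x, (SignType.sign (G x) : ℝ) * H x ∂μ :=
        le_sub_self_iff _ |>.2 hGH.integral_sign_mul_nonpos
    _ = ∫ x, (κ * |G x| - SignType.sign (G x) * H x) ∂μ := by
        rw [integral_sub (hG.abs.const_mul κ) hsign, integral_const_mul]
    _ ≤ ∫ x, |H x - κ * G x| ∂μ :=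
        integral_mono ((hG.abs.const_mul κ).sub hsign)
          (hGH.integrable.sub (hG.const_mul κ)).abs hpointwise

end IsSignDissipative

end SignDissipative

section JumpOperator

variable {α β : Type*} [MeasurableSpace α] [MeasurableSpace β] {μ : Measure α} {ν : Measure β}

/-- The jump operator on functions on `α` whose jumps from `x` are labelled by `y : β`: the jump
with label `y` has rate `r (x, y)` with respect to `ν` and leads to the state `f (x, y)`. -/
def jumpOperator (ν : Measure β) (r : α × β → ℝ) (f : α × β → α) (G : α → ℝ) (x : α) : ℝ :=
  ∫ y, r (x, y) * (G (f (x, y)) - G x) ∂ν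

variable [SFinite ν] {G : α → ℝ}

theorem integrable_mul_comp_fst {r : α × β → ℝ} (hr : AEStronglyMeasurable r (μ.prod ν))
    (hr₀ : ∀ z, 0 ≤ r z) (hr_int : ∀ᵐ x ∂μ, Integrable (fun y => r (x, y)) ν)
    (hG : AEStronglyMeasurable G μ) (hrG : Integrable (fun x => (∫ y, r (x, y) ∂ν) * G x) μ) :
    Integrable (fun z => r z * G z.1) (μ.prod ν) := by
  refine (integrable_prod_iff (hr.mul hG.comp_fst)).2 ⟨?_, ?_⟩
  · filter_upwards [hr_int] with x hx
    exact hx.mul_const (G x)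
  · refine hrG.norm.congr (ae_of_all _ fun x => ?_)
    have hrate : 0 ≤ ∫ y, r (x, y) ∂ν := integral_nonneg fun y => hr₀ (x, y)
    simp only [Pi.mul_apply, norm_mul, Real.norm_of_nonneg hrate, Real.norm_of_nonneg (hr₀ _),
      integral_mul_const]

theorem integrable_jumpOperator [SFinite μ] {r : α × β → ℝ} {f : α × β → α}
    (hin : Integrable (fun z => r z * G (f z)) (μ.prod ν))
    (hout : Integrable (fun z => r z * G z.1) (μ.prod ν)) :
    Integrable (jumpOperator ν r f G) μ := by
  have := (hin.sub hout).integral_prod_left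
  simp only [Pi.sub_apply, ← mul_sub] at this
  exact this

theorem integral_sign_mul_jumpOperator_le [SFinite μ] {r : α × β → ℝ} {f : α × β → α}
    (hr : ∀ z, 0 ≤ r z) (hG : AEStronglyMeasurable G μ)
    (hin : Integrable (fun z => r z * G (f z)) (μ.prod ν))
    (hout : Integrable (fun z => r z * G z.1) (μ.prod ν)) :
    ∫ x, (SignType.sign (G x) : ℝ) * jumpOperator ν r f G x ∂μ ≤
      ∫ z, r z * |G (f z)| ∂μ.prod ν - ∫ z, r z * |G z.1| ∂μ.prod ν := by
  have hin_abs := integrable_mul_abs hr hin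
  have hout_abs := integrable_mul_abs hr hout
  have hsign : Integrable (fun z => SignType.sign (G z.1) * (r z * (G (f z) - G z.1)))
      (μ.prod ν) :=
    integrable_sign_mul hG.comp_fst (by simp only [mul_sub]; exact hin.sub hout)
  have hpointwise (z : α × β) : SignType.sign (G z.1) * (r z * (G (f z) - G z.1)) ≤
      r z * |G (f z)| - r z * |G z.1| :=
    calc SignType.sign (G z.1) * (r z * (G (f z) - G z.1))
        = r z * (SignType.sign (G z.1) * G (f z)) - r z * |G z.1| := by
          rw [← sign_mul_self (G z.1)]; ring
      _ ≤ r z * |G (f z)| - r z * |G z.1| :=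
          sub_le_sub_right (mul_le_mul_of_nonneg_left (sign_mul_le_abs _ _) (hr z)) _
  calc ∫ x, (SignType.sign (G x) : ℝ) * jumpOperator ν r f G x ∂μ
      = ∫ z, SignType.sign (G z.1) * (r z * (G (f z) - G z.1)) ∂μ.prod ν := by
        simp only [integral_prod _ hsign, integral_const_mul, jumpOperator]
    _ ≤ ∫ z, (r z * |G (f z)| - r z * |G z.1|) ∂μ.prod ν :=
        integral_mono hsign (hin_abs.sub hout_abs) hpointwise
    _ = ∫ z, r z * |G (f z)| ∂μ.prod ν - ∫ z, r z * |G z.1| ∂μ.prod ν :=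
        integral_sub hin_abs hout_abs

/-- Here `r'` is the rate of the reversed jumps, so that `hle` compares the rate of entering a state
with the rate of leaving it. -/
theorem isSignDissipative_jumpOperator [SFinite μ] {r r' : α × β → ℝ} {T : α × β → α × β}
    (hT : MeasurePreserving T (μ.prod ν) (μ.prod ν)) (hrr' : ∀ z, r' (T z) = r z)
    (hr' : ∀ z, 0 ≤ r' z) (hG : AEStronglyMeasurable G μ)
    (hout : Integrable (fun z => r z * G z.1) (μ.prod ν))
    (hin : Integrable (fun z => r' z * G z.1) (μ.prod ν))
    (hle : ∀ᵐ x ∂μ, ∫ y, r' (x, y) ∂ν ≤ ∫ y, r (x, y) ∂ν) :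
    IsSignDissipative μ G (jumpOperator ν r (fun z => (T z).1) G) := by
  have hr (z : α × β) : 0 ≤ r z := hrr' z ▸ hr' (T z)
  have hjump : Integrable (fun z => r z * G (T z).1) (μ.prod ν) := by
    simpa only [Function.comp_def, hrr'] using hT.integrable_comp_of_integrable hin
  have hout_abs := integrable_mul_abs hr hout
  have hin_abs := integrable_mul_abs hr' hin
  have hchange : ∫ z, r z * |G (T z).1| ∂μ.prod ν = ∫ z, r' z * |G z.1| ∂μ.prod ν := by
    have := integral_map hT.aemeasurable (hT.map_eq.symm ▸ hin_abs.aestronglyMeasurable)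
    simpa only [hT.map_eq, hrr'] using this.symm
  have hflow : ∫ z, r' z * |G z.1| ∂μ.prod ν ≤ ∫ z, r z * |G z.1| ∂μ.prod ν := by
    rw [integral_prod _ hin_abs, integral_prod _ hout_abs]
    refine integral_mono_ae hin_abs.integral_prod_left hout_abs.integral_prod_left ?_
    filter_upwards [hle] with x hx
    simpa only [integral_mul_const] using mul_le_mul_of_nonneg_right hx (abs_nonneg (G x))
  refine ⟨integrable_jumpOperator hjump hout, ?_⟩
  calc ∫ x, SignType.sign (G x) * jumpOperator ν r (fun z => (T z).1) G x ∂μ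
      ≤ ∫ z, r z * |G (T z).1| ∂μ.prod ν - ∫ z, r z * |G z.1| ∂μ.prod ν :=
        integral_sign_mul_jumpOperator_le hr hG hjump hout
    _ = ∫ z, r' z * |G z.1| ∂μ.prod ν - ∫ z, r z * |G z.1| ∂μ.prod ν := by rw [hchange]
    _ ≤ 0 := sub_nonpos.2 hflow

end JumpOperator

section BinaryJumpOperator

variable {ι E : Type*}

/-- Exchanges the coordinates `i` and `j` of a configuration with an auxiliary pair of points. -/
def exchangePair [DecidableEq ι] (i j : ι) (z : (ι → E) × (E × E)) : (ι → E) × (E × E) :=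
  (Function.update (Function.update z.1 i z.2.1) j z.2.2, (z.1 i, z.1 j))

/-- The permutation of coordinates corresponding to `exchangePair`, where the auxiliary pair is
indexed by `Fin 2`; the correspondence requires `i ≠ j`. -/
def exchangePerm [DecidableEq ι] (i j : ι) : Equiv.Perm (ι ⊕ Fin 2) :=
  Equiv.swap (.inl j) (.inr 1) * Equiv.swap (.inl i) (.inr 0)

variable [MeasurableSpace E]

/-- Flattens a configuration and an auxiliary pair of points into one configuration, turning
`exchangePair` into a permutation of coordinates. -/
def flattenPair (ι E : Type*) [MeasurableSpace E] : (ι → E) × (E × E) ≃ᵐ (ι ⊕ Fin 2 → E) :=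
  ((MeasurableEquiv.sumPiEquivProdPi fun _ => E).trans
    ((MeasurableEquiv.refl _).prodCongr MeasurableEquiv.finTwoArrow)).symm

theorem flattenPair_symm_apply (g : ι ⊕ Fin 2 → E) :
    (flattenPair ι E).symm g = (fun k => g (.inl k), (g (.inr 0), g (.inr 1))) :=
  rfl

theorem exchangePair_flattenPair_symm [DecidableEq ι] {i j : ι} (hij : i ≠ j)
    (g : ι ⊕ Fin 2 → E) :
    exchangePair i j ((flattenPair ι E).symm g) =
      (flattenPair ι E).symm (g ∘ exchangePerm i j) := by
  simp only [flattenPair_symm_apply, exchangePair, exchangePerm]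
  refine Prod.ext (funext fun k => ?_) (Prod.ext ?_ ?_)
  · by_cases hkj : k = j
    · simp [hkj, Equiv.swap_apply_def, hij.symm]
    · by_cases hki : k = i
      · simp [hki, Equiv.swap_apply_def, hij]
      · simp [hki, hkj, Equiv.swap_apply_def]
  · simp [Equiv.swap_apply_def, hij]
  · simp [Equiv.swap_apply_def]

variable [Fintype ι] {μ : Measure E} [SigmaFinite μ]

theorem measurePreserving_flattenPair :
    MeasurePreserving (flattenPair ι E) ((Measure.pi fun _ => μ).prod (μ.prod μ))
      (Measure.pi fun _ => μ) :=
  (((MeasurePreserving.id _).prod (measurePreserving_finTwoArrow μ)).comp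
    (measurePreserving_sumPiEquivProdPi fun _ => μ)).symm (flattenPair ι E).symm

theorem measurePreserving_exchangePair [DecidableEq ι] {i j : ι} (hij : i ≠ j) :
    MeasurePreserving (exchangePair i j) ((Measure.pi fun _ : ι => μ).prod (μ.prod μ))
      ((Measure.pi fun _ : ι => μ).prod (μ.prod μ)) := by
  have hperm : MeasurePreserving (fun g : ι ⊕ Fin 2 → E => g ∘ exchangePerm i j)
      (Measure.pi fun _ => μ) (Measure.pi fun _ => μ) :=
    measurePreserving_arrowCongr' _ _ (exchangePerm i j).symm (MeasurableEquiv.refl E)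
      fun _ => .id μ
  have hflatten : MeasurePreserving (flattenPair ι E) ((Measure.pi fun _ => μ).prod (μ.prod μ))
      (Measure.pi fun _ => μ) := measurePreserving_flattenPair
  have hexchange : exchangePair i j =
      (flattenPair ι E).symm ∘ (fun g => g ∘ exchangePerm i j) ∘ flattenPair ι E := by
    funext z
    simpa only [Function.comp_apply, MeasurableEquiv.symm_apply_apply] using
      exchangePair_flattenPair_symm hij (flattenPair ι E z)
  exact hexchange ▸ (hflatten.symm _).comp (hperm.comp hflatten)

theorem quasiMeasurePreserving_evalPair {i j : ι} (hij : i ≠ j) :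
    Measure.QuasiMeasurePreserving (fun x : ι → E => (x i, x j)) (Measure.pi fun _ => μ)
      (μ.prod μ) := by
  refine ⟨by fun_prop, Measure.AbsolutelyContinuous.mk fun s hs hμs => ?_⟩
  have hnull : ((Measure.pi fun _ : ι => μ).prod (μ.prod μ))
      (((fun x : ι → E => (x i, x j)) ⁻¹' s) ×ˢ Set.univ) = 0 := by
    classical
    rw [Set.prod_univ]
    exact (Measure.quasiMeasurePreserving_snd.comp
      (measurePreserving_exchangePair hij).quasiMeasurePreserving).preimage_null hμs
  rw [Measure.prod_prod, mul_eq_zero] at hnull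
  rw [Measure.map_apply (by fun_prop) hs]
  refine hnull.elim id fun hμ => ?_
  rw [← Set.univ_prod_univ, Measure.prod_prod, mul_self_eq_zero] at hμ
  refine measure_mono_null (Set.subset_univ _) ?_
  rw [Measure.pi_univ]
  exact Finset.prod_eq_zero (Finset.mem_univ i) hμ

/-- The operator through which the coordinates `i` and `j` of a configuration jump, with rate
`c (x i, x j) (y₁, y₂)`, to `y₁` and `y₂`. -/
def pairJumpOperator [DecidableEq ι] (μ : Measure E) (c : E × E → E × E → ℝ) (i j : ι) :
    ((ι → E) → ℝ) → (ι → E) → ℝ :=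
  jumpOperator (μ.prod μ) (fun z => c (z.1 i, z.1 j) z.2) fun z => (exchangePair i j z).1

/-- The operator `L₀` of the binary-jump dynamics in a measure space `(E, μ)`, on functions of
configurations indexed by `ι`. -/
def binaryJumpOperator [LinearOrder ι] (μ : Measure E) (c : E × E → E × E → ℝ)
    (G : (ι → E) → ℝ) (x : ι → E) : ℝ :=
  ∑ i, ∑ j, if i < j then pairJumpOperator μ c i j G x else 0

variable {c : E × E → E × E → ℝ} {G : (ι → E) → ℝ}

theorem integrable_rate_mul {C : ℝ} (hc : Measurable (Function.uncurry c))
    (hc₀ : ∀ x y, 0 ≤ c x y) (hC : ∀ᵐ x ∂μ.prod μ, ∫ y, c x y ∂μ.prod μ ≤ C) {i j : ι}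
    (hij : i ≠ j) (hG : Integrable G (Measure.pi fun _ => μ)) :
    Integrable (fun x => (∫ y, c (x i, x j) y ∂μ.prod μ) * G x) (Measure.pi fun _ => μ) := by
  have hrate : StronglyMeasurable fun x => ∫ y, c x y ∂μ.prod μ :=
    hc.stronglyMeasurable.integral_prod_right
  refine hG.bdd_mul (c := C) (hrate.comp_measurable (by fun_prop)).aestronglyMeasurable ?_
  filter_upwards [(quasiMeasurePreserving_evalPair hij).ae hC] with x hx
  rwa [Real.norm_of_nonneg (integral_nonneg (hc₀ _))]

theorem isSignDissipative_pairJumpOperator [DecidableEq ι] (hc : Measurable (Function.uncurry c))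
    (hc₀ : ∀ x y, 0 ≤ c x y)
    (hout : ∀ᵐ x ∂μ.prod μ, Integrable (fun y => c x y) (μ.prod μ))
    (hin : ∀ᵐ x ∂μ.prod μ, Integrable (fun y => c y x) (μ.prod μ))
    (hle : ∀ᵐ x ∂μ.prod μ, ∫ y, c y x ∂μ.prod μ ≤ ∫ y, c x y ∂μ.prod μ) {i j : ι}
    (hij : i ≠ j) (hG : AEStronglyMeasurable G (Measure.pi fun _ => μ))
    (hcG : Integrable (fun x => (∫ y, c (x i, x j) y ∂μ.prod μ) * G x) (Measure.pi fun _ => μ)) :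
    IsSignDissipative (Measure.pi fun _ => μ) G (pairJumpOperator μ c i j G) := by
  have hpair := quasiMeasurePreserving_evalPair (μ := μ) hij
  have hrate_in : StronglyMeasurable fun x => ∫ y, c y x ∂μ.prod μ :=
    (hc.comp measurable_swap).stronglyMeasurable.integral_prod_right'
  have hcG_in : Integrable (fun x => (∫ y, c y (x i, x j) ∂μ.prod μ) * G x)
      (Measure.pi fun _ => μ) := by
    refine hcG.mono ((hrate_in.comp_measurable (by fun_prop)).aestronglyMeasurable.mul hG)
      ?_
    filter_upwards [hpair.ae hle] with x hx
    rw [norm_mul, norm_mul]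
    refine mul_le_mul_of_nonneg_right ?_ (norm_nonneg _)
    rwa [Real.norm_of_nonneg (integral_nonneg fun y => hc₀ _ _),
      Real.norm_of_nonneg (integral_nonneg fun y => hc₀ _ _)]
  refine isSignDissipative_jumpOperator (r' := fun z : (ι → E) × (E × E) => c z.2 (z.1 i, z.1 j))
    (measurePreserving_exchangePair hij) (fun z => ?_) (fun z => hc₀ _ _) hG
    (integrable_mul_comp_fst ?_ (fun z => hc₀ _ _) (hpair.ae hout) hG hcG)
    (integrable_mul_comp_fst ?_ (fun z => hc₀ _ _) (hpair.ae hin) hG hcG_in) (hpair.ae hle)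
  · simp [exchangePair, hij]
  · exact (hc.comp (f := fun z : (ι → E) × (E × E) => ((z.1 i, z.1 j), z.2))
      (by fun_prop)).aestronglyMeasurable
  · exact (hc.comp (f := fun z : (ι → E) × (E × E) => (z.2, (z.1 i, z.1 j)))
      (by fun_prop)).aestronglyMeasurable

theorem statement1_general [LinearOrder ι] (hc : Measurable (Function.uncurry c))
    (hc₀ : ∀ x y, 0 ≤ c x y)
    (hout : ∀ᵐ x ∂μ.prod μ, Integrable (fun y => c x y) (μ.prod μ))
    (hin : ∀ᵐ x ∂μ.prod μ, Integrable (fun y => c y x) (μ.prod μ))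
    (hle : ∀ᵐ x ∂μ.prod μ, ∫ y, c y x ∂μ.prod μ ≤ ∫ y, c x y ∂μ.prod μ)
    (hG : Integrable G (Measure.pi fun _ => μ))
    (hcG : ∀ i j : ι, i < j → Integrable (fun x => (∫ y, c (x i, x j) y ∂μ.prod μ) * G x)
      (Measure.pi fun _ => μ)) (κ : ℝ) :
    κ * ∫ x, |G x| ∂(Measure.pi fun _ => μ) ≤
      ∫ x, |binaryJumpOperator μ c G x - κ * G x| ∂(Measure.pi fun _ => μ) := by
  refine IsSignDissipative.mul_integral_abs_le ?_ hG κ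
  refine .sum hG.aestronglyMeasurable fun i _ => .sum hG.aestronglyMeasurable fun j _ => ?_
  by_cases hij : i < j
  · simpa only [if_pos hij] using isSignDissipative_pairJumpOperator hc hc₀ hout hin hle hij.ne
      hG.aestronglyMeasurable (hcG i j hij)
  · simpa only [if_neg hij] using IsSignDissipative.zero

end BinaryJumpOperator

/-- If `a₂(x₁,x₂) ≤ a₁(x₁,x₂)` a.e., then for every `n ≥ 2` the operator
`L₀⁽ⁿ⁾` is dissipative on symmetric functions: for every `κ > 0` and every symmetric
`G ∈ X_n = L¹((ℝ^d)ⁿ)`, `‖L₀⁽ⁿ⁾G − κG‖_{X_n} ≥ κ‖G‖_{X_n}`. -/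
theorem statement1
    (d : ℕ) (hd : 1 ≤ d)
    (c : Rd d → Rd d → Rd d → Rd d → ℝ)
    (hc_meas : Measurable fun p : (Rd d × Rd d) × Rd d × Rd d => c p.1.1 p.1.2 p.2.1 p.2.2)
    (hc_nonneg : ∀ x₁ x₂ y₁ y₂, 0 ≤ c x₁ x₂ y₁ y₂)
    (c₁ c₂ : ℝ)
    (hc₁int : ∀ᵐ x : Rd d × Rd d, Integrable fun y : Rd d × Rd d => c x.1 x.2 y.1 y.2)
    (hc₁ : ∀ᵐ x : Rd d × Rd d, (∫ y : Rd d × Rd d, c x.1 x.2 y.1 y.2) ≤ c₁)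
    (hc₂int : ∀ᵐ x : Rd d × Rd d, Integrable fun y : Rd d × Rd d => c y.1 y.2 x.1 x.2)
    (hc₂ : ∀ᵐ x : Rd d × Rd d, (∫ y : Rd d × Rd d, c y.1 y.2 x.1 x.2) ≤ c₂)
    -- a.e. domination `a₂ ≤ a₁`
    (hdom : ∀ᵐ x : Rd d × Rd d,
      (∫ y : Rd d × Rd d, c y.1 y.2 x.1 x.2) ≤ ∫ y : Rd d × Rd d, c x.1 x.2 y.1 y.2)
    (n : ℕ) (hn : 2 ≤ n)
    (G : (Fin n → Rd d) → ℝ) (hG : Integrable G)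
    -- `G` is (a.e.) invariant under permutations of its `n` coordinates
    (hGsym : ∀ σ : Equiv.Perm (Fin n), ∀ᵐ x : Fin n → Rd d, G (x ∘ σ) = G x)
    (κ : ℝ) (hκ : 0 < κ) :
    κ * ∫ x : Fin n → Rd d, |G x| ≤
      ∫ x : Fin n → Rd d, |L0n d n c G x - κ * G x| :=
  statement1_general (c := fun x y => c x.1 x.2 y.1 y.2) hc_meas (fun _ _ => hc_nonneg _ _ _ _)
    hc₁int hc₂int hdom hG
    (fun _ _ hij => integrable_rate_mul hc_meas (fun _ _ => hc_nonneg _ _ _ _) hc₁ hij.ne hG) κ
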